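/- Let n ≥ 1 and let (B_m(t))_{m ≥ 0} be the family of polynomials in ℚ[t] determined by the formal power series identities B_m(t) = (1−t)^{m+1} · Σ_{k ≥ 0} (2k+1)^m t^k for every m ≥ 0. Then the following identity of polynomials in ℚ[t] holds: n! · Σ_{π ∈ 𝔦_n} 4^{lpk(π)} t^{lpk(π)} (1+t)^{n−2·lpk(π)} = Σ_{k=0}^{n} d_{n,k} · B_k(t) (1−t)^{n−k}, where d_{n,k} is the number of permutations π of [n] such that π² has exactly k odd cycles (cycles of odd length, counting fixed points as cycles of length 1). (This is the formula ((1+t)^n/(1−t)^{n+1}) I_n^{lpk}(4t/(1+t)²) = Σ_{k=0}^n (d_{n,k}/n!) B_k(t)/(1−t)^{k+1}, where I_n^{lpk}(t) = Σ_{π ∈ 𝔦_n} t^{lpk(π)}, with denominators cleared; note 2·lpk(π) ≤ n for every π ∈ S_n.) -/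

import Mathlib

open scoped Classical

noncomputable section

def oneLine (n : ℕ) (π : Equiv.Perm (Fin n)) (i : ℕ) : ℕ :=
  if h : 1 ≤ i ∧ i ≤ n then (π ⟨i - 1, by omega⟩).val + 1 else 0

def des (n : ℕ) (π : Equiv.Perm (Fin n)) : ℕ :=
  ((Finset.Icc 1 (n - 1)).filter fun i => oneLine n π (i + 1) < oneLine n π i).card

def pk (n : ℕ) (π : Equiv.Perm (Fin n)) : ℕ :=
  ((Finset.Icc 2 (n - 1)).filter fun i =>
    oneLine n π (i - 1) < oneLine n π i ∧ oneLine n π (i + 1) < oneLine n π i).card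

def lpk (n : ℕ) (π : Equiv.Perm (Fin n)) : ℕ :=
  ((Finset.Icc 1 (n - 1)).filter fun i =>
    oneLine n π (i - 1) < oneLine n π i ∧ oneLine n π (i + 1) < oneLine n π i).card

def pval (n : ℕ) (π : Equiv.Perm (Fin n)) : ℕ :=
  ((Finset.Icc 2 (n - 1)).filter fun i =>
    oneLine n π i < oneLine n π (i - 1) ∧ oneLine n π i < oneLine n π (i + 1)).card

def udr (n : ℕ) (π : Equiv.Perm (Fin n)) : ℕ := lpk n π + pval n π + 1

def fullCycleType (n : ℕ) (π : Equiv.Perm (Fin n)) : Multiset ℕ :=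
  π.cycleType + Multiset.replicate (n - π.support.card) 1

def numCycles (n : ℕ) (π : Equiv.Perm (Fin n)) : ℕ := Multiset.card (fullCycleType n π)

def numOddCycles (n : ℕ) (π : Equiv.Perm (Fin n)) : ℕ :=
  Multiset.card ((fullCycleType n π).filter fun p => p % 2 = 1)

def IsCyclicPerm (n : ℕ) (π : Equiv.Perm (Fin n)) : Prop :=
  fullCycleType n π = {n}

def cyclicSet (n : ℕ) : Finset (Equiv.Perm (Fin n)) :=
  Finset.univ.filter fun π => IsCyclicPerm n π

def invSet (n : ℕ) : Finset (Equiv.Perm (Fin n)) :=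
  Finset.univ.filter fun π => π ^ 2 = 1

def eulerianA (m : ℕ) : Polynomial ℚ :=
  ∑ π : Equiv.Perm (Fin m), Polynomial.X ^ (des m π + 1)

def peakP (m : ℕ) : Polynomial ℚ :=
  ∑ π : Equiv.Perm (Fin m), Polynomial.X ^ (pk m π + 1)

def leftPeakP (m : ℕ) : Polynomial ℚ :=
  ∑ π : Equiv.Perm (Fin m), Polynomial.X ^ (lpk m π)

def cnk (n k : ℕ) : ℕ :=
  (Finset.univ.filter fun π : Equiv.Perm (Fin n) =>
    (∀ p ∈ fullCycleType n π, ¬ (4 ∣ p)) ∧ numCycles n (π ^ 2) = k).card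

def bnk (n k : ℕ) : ℕ :=
  (Finset.univ.filter fun π : Equiv.Perm (Fin n) => numCycles n (π ^ 2) = k).card

def dnk (n k : ℕ) : ℕ :=
  (Finset.univ.filter fun π : Equiv.Perm (Fin n) => numOddCycles n (π ^ 2) = k).card

/-!
Fix `k` and put `y = 2k + 1`. For a permutation `π` of `[n]`, the number of enriched `π`-partitions
`f : [n] → {0, …, 2k}` is the coefficient of `t ^ k` in
`(4t) ^ lpk π * (1 + t) ^ (n - 2 lpk π) / (1 - t) ^ (n + 1)`: scanning `π` from left to right, each
position contributes a factor which depends only on whether it lies between two ascents, between two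
descents, at a left peak or at a valley.

When `π` is an involution, the pair `(π, f)` can be recovered from the multiplicities of the
unordered pairs `{f i, f (π i)}`, as in the Robinson–Schensted–Knuth correspondence for symmetric
matrices. Hence the generating function in `n` of the number of such pairs is a product over
unordered pairs of letters. For `m ≥ 1`, the coefficient of `X ^ (m - 1)` in its logarithmic
derivative is `y` for odd `m`, `y ^ 2` for `m ≡ 2 mod 4` and `1` for `4 ∣ m`, that is, `y` to the
number of odd cycles of the square of an `m`-cycle. By the exponential formula for the cycle index
of the symmetric group, `n!` times the number of pairs is therefore the sum over all permutations
`σ` of `y` to the number of odd cycles of `σ ^ 2`, and multiplying by `t ^ k` and summing over `k`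
gives the identity.
-/

section CycleIndex

open Finset Equiv PowerSeries
open scoped Nat

/-- The number `z_s = ∏ i, i ^ mᵢ * mᵢ!`, where `mᵢ` is the multiplicity of `i` in `s`: the order of
the centralizer of a permutation whose cycle lengths, with fixed points included, are the elements
of `s`. -/
def centralizerOrder (s : Multiset ℕ) : ℕ := s.prod * ∏ i ∈ s.toFinset, (s.count i)!

lemma centralizerOrder_cons (m : ℕ) (s : Multiset ℕ) :
    centralizerOrder (m ::ₘ s) = m * (s.count m + 1) * centralizerOrder s := by
  have extend : ∏ i ∈ s.toFinset, (s.count i)! = ∏ i ∈ (m ::ₘ s).toFinset, (s.count i)! :=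
    prod_subset (Multiset.toFinset_subset.2 (Multiset.subset_cons s m)) fun i _ hi ↦ by
      rw [Multiset.count_eq_zero_of_notMem (by simpa using hi), Nat.factorial_zero]
  have rest : ∏ i ∈ (m ::ₘ s).toFinset.erase m, ((m ::ₘ s).count i)! =
      ∏ i ∈ (m ::ₘ s).toFinset.erase m, (s.count i)! :=
    prod_congr rfl fun i hi ↦ by rw [Multiset.count_cons_of_ne (ne_of_mem_erase hi)]
  have hm : m ∈ (m ::ₘ s).toFinset := by simp
  rw [centralizerOrder, centralizerOrder, extend, ← mul_prod_erase _ _ hm, ← mul_prod_erase _ _ hm,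
    rest, Multiset.count_cons_self, Nat.factorial_succ, Multiset.prod_cons]
  ring

lemma centralizerOrder_replicate_one_add (k : ℕ) {s : Multiset ℕ} (hs : 1 ∉ s) :
    centralizerOrder (Multiset.replicate k 1 + s) = k ! * centralizerOrder s := by
  induction k with
  | zero => simp
  | succ k ih =>
    rw [Multiset.replicate_succ, Multiset.cons_add, centralizerOrder_cons, ih, Multiset.count_add,
      Multiset.count_replicate_self, Multiset.count_eq_zero_of_notMem hs, Nat.factorial_succ]
    ring

variable {K : Type*} [Field K] [CharZero K]

lemma cast_centralizerOrder_parts_ne_zero {n : ℕ} (p : n.Partition) :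
    (centralizerOrder p.parts : K) ≠ 0 :=
  Nat.cast_ne_zero.2 <| mul_ne_zero (Multiset.prod_ne_zero fun h ↦ (p.parts_pos h).false)
    (prod_ne_zero_iff.2 fun _ _ ↦ Nat.factorial_ne_zero _)

/-- The complete homogeneous symmetric function `h_n` expressed through the power sums `w m`, that
is, the cycle index of the symmetric group on `n` letters evaluated at `w`. -/
def cycleIndex (w : ℕ → K) (n : ℕ) : K :=
  ∑ p : n.Partition, (p.parts.map w).prod / centralizerOrder p.parts

lemma cycleIndex_zero (w : ℕ → K) : cycleIndex w 0 = 1 := by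
  simp [cycleIndex, centralizerOrder]

lemma sum_count_mul_div_centralizerOrder (w : ℕ → K) {m n : ℕ} (hm : 1 ≤ m) (hmn : m ≤ n) :
    ∑ p : n.Partition, (m * p.parts.count m : K) *
      ((p.parts.map w).prod / centralizerOrder p.parts) = w m * cycleIndex w (n - m) := by
  have support : ∀ p : n.Partition, (m * p.parts.count m : K) *
      ((p.parts.map w).prod / centralizerOrder p.parts) ≠ 0 → m ∈ p.parts := fun p h ↦
    Multiset.count_ne_zero.1 fun h0 ↦ h (by simp [h0])
  rw [cycleIndex, mul_sum, ← sum_filter_of_ne fun p _ ↦ support p,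
    ← sum_subtype_eq_sum_filter, Finset.subtype_univ,
    ← (Nat.Partition.partitionWithPartEquiv hm hmn).symm.sum_comp]
  refine sum_congr rfl fun p _ ↦ ?_
  have hz : (centralizerOrder p.parts : K) ≠ 0 := cast_centralizerOrder_parts_ne_zero p
  have hm0 : (m : K) ≠ 0 := Nat.cast_ne_zero.2 (by lia)
  have hc : (p.parts.count m + 1 : K) ≠ 0 := Nat.cast_add_one_ne_zero _
  simp only [Nat.Partition.partitionWithPartEquiv_symm_apply_parts, Multiset.map_cons,
    Multiset.prod_cons, Multiset.count_cons_self, centralizerOrder_cons]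
  push_cast
  field_simp

theorem derivative_mk_cycleIndex (w : ℕ → K) :
    d⁄dX K (mk (cycleIndex w)) = mk (fun m ↦ w (m + 1)) * mk (cycleIndex w) := by
  ext n
  have size (p : (n + 1).Partition) : (n + 1 : K) =
      ∑ m ∈ range (n + 1), ((m + 1 : ℕ) * p.parts.count (m + 1) : K) := by
    have hsub : p.parts.toFinset ⊆ range (n + 1 + 1) := fun m hm ↦
      mem_range_succ_iff.2 (p.le_of_mem_parts (Multiset.mem_toFinset.1 hm))
    have := p.parts_sum ▸ sum_multiset_count_of_subset _ _ hsub
    rw [sum_range_succ', smul_zero, add_zero] at this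
    simpa [mul_comm] using congrArg (Nat.cast : ℕ → K) this
  calc coeff n (d⁄dX K (mk (cycleIndex w)))
      = ∑ p : (n + 1).Partition, ∑ m ∈ range (n + 1), ((m + 1 : ℕ) * p.parts.count (m + 1) : K) *
          ((p.parts.map w).prod / centralizerOrder p.parts) := by
        rw [coeff_derivative, coeff_mk, cycleIndex, mul_comm, mul_sum]
        exact sum_congr rfl fun p _ ↦ by rw [← sum_mul, ← size p]
    _ = ∑ m ∈ range (n + 1), w (m + 1) * cycleIndex w (n - m) := by
        rw [sum_comm]
        refine sum_congr rfl fun m hm ↦ ?_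
        rw [sum_count_mul_div_centralizerOrder w (by lia) (by grind), Nat.add_sub_add_right]
    _ = coeff n (mk (fun m ↦ w (m + 1)) * mk (cycleIndex w)) := by
        simp only [coeff_mul, coeff_mk, Nat.sum_antidiagonal_eq_sum_range_succ_mk]

lemma eq_of_derivative_eq_mul {W F G : K⟦X⟧} (hF : d⁄dX K F = W * F) (hG : d⁄dX K G = W * G)
    (h0 : constantCoeff F = constantCoeff G) : F = G := by
  ext n
  induction n using Nat.strong_induction_on with
  | _ n ih =>
    cases n with
    | zero => simpa using h0
    | succ n =>
      have step {H : K⟦X⟧} (hH : d⁄dX K H = W * H) : coeff (n + 1) H * (n + 1) =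
          ∑ p ∈ antidiagonal n, coeff p.1 W * coeff p.2 H := by
        rw [← coeff_derivative, hH, coeff_mul]
      refine mul_right_cancel₀ (Nat.cast_add_one_ne_zero n) ?_
      rw [step hF, step hG]
      exact sum_congr rfl fun p hp ↦ by rw [ih p.2 (by have := mem_antidiagonal.1 hp; lia)]

theorem coeff_eq_cycleIndex {w : ℕ → K} {F : K⟦X⟧} (h0 : constantCoeff F = 1)
    (hF : d⁄dX K F = mk (fun m ↦ w (m + 1)) * F) (n : ℕ) : coeff n F = cycleIndex w n := by
  rw [eq_of_derivative_eq_mul hF (derivative_mk_cycleIndex w) (by simp [h0, cycleIndex_zero]),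
    coeff_mk]

variable {α : Type*} [Fintype α] [DecidableEq α]

lemma card_partition_eq_mul_centralizerOrder (p : (Fintype.card α).Partition) :
    #{σ : Perm α | σ.partition = p} * centralizerOrder p.parts = (Fintype.card α)! := by
  set s := p.parts.filter (2 ≤ ·) with hs
  have parts_eq : p.parts = Multiset.replicate (p.parts.count 1) 1 + s := by
    rw [← Multiset.filter_eq', add_comm]
    conv_lhs => rw [← Multiset.filter_add_not (2 ≤ ·) p.parts]
    congr 1
    refine Multiset.filter_congr fun i hi ↦ ?_
    have := p.parts_pos hi
    lia
  have card_eq : Fintype.card α = p.parts.count 1 + s.sum := by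
    simpa using p.parts_sum.symm.trans (congrArg Multiset.sum parts_eq)
  have key := Perm.card_of_cycleType_mul_eq α s
  rw [if_pos ⟨by lia, fun a ha ↦ (Multiset.mem_filter.1 ha).2⟩,
    show Fintype.card α - s.sum = p.parts.count 1 by lia, mul_assoc] at key
  have hz : centralizerOrder p.parts = (p.parts.count 1)! * centralizerOrder s := by
    conv_lhs => rw [parts_eq, centralizerOrder_replicate_one_add _ (by simp [hs])]
  rw [← key, hz, centralizerOrder]
  congr 2
  ext σ
  simp only [mem_filter_univ]
  constructor
  · rintro rfl
    exact σ.filter_parts_partition_eq_cycleType.symm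
  · intro h
    ext1
    rw [Perm.parts_partition, ← σ.sum_cycleType, parts_eq, h, add_comm]
    congr 2
    lia

lemma sum_perm_prod_map_parts (w : ℕ → K) :
    ∑ σ : Perm α, (σ.partition.parts.map w).prod =
      (Fintype.card α)! * cycleIndex w (Fintype.card α) := by
  rw [← sum_fiberwise' univ Perm.partition fun p ↦ (p.parts.map w).prod, cycleIndex, mul_sum]
  refine sum_congr rfl fun p _ ↦ ?_
  have hz : (centralizerOrder p.parts : K) ≠ 0 := cast_centralizerOrder_parts_ne_zero p
  rw [sum_const, nsmul_eq_mul, ← card_partition_eq_mul_centralizerOrder p]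
  push_cast
  field_simp

end CycleIndex

section CyclePowers

open Finset Equiv

variable {α : Type*} [Fintype α] [DecidableEq α]

lemma minimalPeriod_eq_card_support {σ c : Perm α} {x : α} (hc : c ∈ σ.cycleFactorsFinset)
    (hx : x ∈ c.support) : Function.minimalPeriod σ x = #c.support := by
  have hcycle : c.IsCycle := (Perm.mem_cycleFactorsFinset_iff.1 hc).1
  have dvd_iff (k : ℕ) : Function.minimalPeriod σ x ∣ k ↔ #c.support ∣ k := by
    rw [← Function.isPeriodicPt_iff_minimalPeriod_dvd, ← hcycle.orderOf,
      orderOf_dvd_iff_pow_eq_one, hcycle.pow_eq_one_iff' (Perm.mem_support.1 hx),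
      Perm.cycle_is_cycleOf hx hc, Perm.cycleOf_pow_apply_self, Function.IsPeriodicPt,
      Function.IsFixedPt, Perm.iterate_eq_pow]
  exact Nat.dvd_antisymm ((dvd_iff _).2 dvd_rfl) ((dvd_iff _).1 dvd_rfl)

lemma sum_apply_minimalPeriod {M : Type*} [AddCommMonoid M] (σ : Perm α) (φ : ℕ → M) :
    ∑ x, φ (Function.minimalPeriod σ x) = (σ.partition.parts.map fun m ↦ m • φ m).sum := by
  rw [Perm.parts_partition, Multiset.map_add, Multiset.sum_add,
    ← sum_add_sum_compl σ.support]
  congr 1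
  · rw [Perm.cycleType_def, Multiset.map_map,
      ← sum_fiberwise_of_maps_to fun x hx ↦ Perm.cycleOf_mem_cycleFactorsFinset_iff.2 hx]
    refine sum_congr rfl fun c hc ↦ ?_
    have fiber : {x ∈ σ.support | σ.cycleOf x = c} = c.support := by
      ext x
      rw [mem_filter]
      constructor
      · rintro ⟨hx, rfl⟩
        exact Perm.mem_support_cycleOf_iff.2 ⟨Perm.SameCycle.refl _ _, hx⟩
      · exact fun hx ↦ ⟨Perm.mem_cycleFactorsFinset_support_le hc hx,
          (Perm.cycle_is_cycleOf hx hc).symm⟩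
    rw [fiber, sum_congr rfl fun x hx ↦ by rw [minimalPeriod_eq_card_support hc hx], sum_const]
    rfl
  · have fixed : ∀ x ∈ σ.supportᶜ, φ (Function.minimalPeriod σ x) = φ 1 := fun x hx ↦ by
      rw [Function.minimalPeriod_eq_one_iff_isFixedPt.2
        (Perm.notMem_support.1 (mem_compl.1 hx))]
    rw [sum_congr rfl fixed]
    simp [card_compl]

lemma mul_count_parts_partition (σ : Perm α) (j : ℕ) :
    j * σ.partition.parts.count j = #{x | Function.minimalPeriod σ x = j} := by
  rw [card_filter, sum_apply_minimalPeriod σ fun m ↦ if m = j then 1 else 0,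
    Multiset.sum_map_eq_nsmul_single j fun m hm _ ↦ by simp [hm]]
  simp [mul_comm]

theorem parts_partition_pow (σ : Perm α) {k : ℕ} (hk : k ≠ 0) :
    (σ ^ k).partition.parts =
      σ.partition.parts.bind fun m ↦ Multiset.replicate (m.gcd k) (m / m.gcd k) := by
  ext j
  rcases j.eq_zero_or_pos with rfl | hj
  · rw [Multiset.count_eq_zero_of_notMem fun h ↦ ((σ ^ k).partition.parts_pos h).false,
      Multiset.count_eq_zero_of_notMem fun h ↦ ?_]
    obtain ⟨m, hm, h0⟩ := Multiset.mem_bind.1 h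
    exact ((Nat.div_gcd_pos_of_pos_left k (σ.partition.parts_pos hm)).ne
      (Multiset.eq_of_mem_replicate h0)).elim
  have period (x : α) : Function.minimalPeriod ⇑(σ ^ k) x =
      Function.minimalPeriod σ x / (Function.minimalPeriod σ x).gcd k := by
    rw [← Function.minimalPeriod_iterate_eq_div_gcd hk, Perm.iterate_eq_pow]
  refine Nat.eq_of_mul_eq_mul_left hj ?_
  rw [mul_count_parts_partition, card_filter]
  simp only [period]
  rw [sum_apply_minimalPeriod σ fun m ↦ if m / m.gcd k = j then 1 else 0, Multiset.count_bind,
    ← Multiset.sum_map_mul_left]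
  congr 1
  refine Multiset.map_congr rfl fun m _ ↦ ?_
  rw [Multiset.count_replicate]
  split_ifs with h
  · rw [smul_eq_mul, mul_one, ← h, Nat.div_mul_cancel (Nat.gcd_dvd_left m k)]
  · simp

end CyclePowers

section SquareOfCycle

open Equiv

lemma parts_partition_eq_fullCycleType {n : ℕ} (σ : Perm (Fin n)) :
    σ.partition.parts = fullCycleType n σ := by
  rw [Perm.parts_partition, Fintype.card_fin]; rfl

/-- The number of odd cycles of the square of an `m`-cycle. -/
def oddCyclesOfSq (m : ℕ) : ℕ :=
  if Odd m then 1 else if m % 4 = 2 then 2 else 0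

lemma card_filter_odd_replicate (m : ℕ) :
    Multiset.card ((Multiset.replicate (m.gcd 2) (m / m.gcd 2)).filter fun p ↦ p % 2 = 1) =
      oddCyclesOfSq m := by
  rcases m.even_or_odd with ⟨j, rfl⟩ | hm
  · have gcd_eq : (j + j).gcd 2 = 2 := Nat.gcd_eq_right (by lia)
    rw [gcd_eq, show (j + j) / 2 = j by lia, oddCyclesOfSq]
    by_cases hj : j % 2 = 1
    · rw [Multiset.filter_eq_self.2 fun i hi ↦ Multiset.eq_of_mem_replicate hi ▸ hj]
      rw [Multiset.card_replicate, if_neg (by grind), if_pos (by lia)]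
    · rw [Multiset.filter_eq_nil.2 fun i hi ↦ Multiset.eq_of_mem_replicate hi ▸ hj]
      rw [Multiset.card_zero, if_neg (by grind), if_neg (by lia)]
  · have gcd_eq : m.gcd 2 = 1 := Nat.coprime_two_right.2 hm
    rw [gcd_eq, Nat.div_one, oddCyclesOfSq, if_pos hm, Multiset.filter_eq_self.2 fun i hi ↦
      Multiset.eq_of_mem_replicate hi ▸ Nat.odd_iff.1 hm, Multiset.card_replicate]

lemma numOddCycles_sq {n : ℕ} (σ : Perm (Fin n)) :
    numOddCycles n (σ ^ 2) = (σ.partition.parts.map oddCyclesOfSq).sum := by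
  rw [numOddCycles, ← parts_partition_eq_fullCycleType, parts_partition_pow σ two_ne_zero,
    Multiset.filter_bind, Multiset.card_bind]
  simp only [Function.comp_def, card_filter_odd_replicate]

lemma numOddCycles_le {n : ℕ} (σ : Perm (Fin n)) : numOddCycles n σ ≤ n := by
  have card_le := Multiset.card_nsmul_le_sum (s := σ.partition.parts) (a := 1)
    fun m hm ↦ σ.partition.parts_pos hm
  rw [σ.partition.parts_sum, smul_eq_mul, mul_one, parts_partition_eq_fullCycleType] at card_le
  exact (Multiset.card_le_card (Multiset.filter_le _ _)).trans (card_le.trans_eq (by simp))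

lemma sum_dnk_mul_pow {R : Type*} [CommSemiring R] (n : ℕ) (y : R) :
    ∑ k ∈ Finset.range (n + 1), (dnk n k : R) * y ^ k =
      ∑ σ : Perm (Fin n), (σ.partition.parts.map fun m ↦ y ^ oddCyclesOfSq m).prod := by
  have pow_eq (σ : Perm (Fin n)) : (σ.partition.parts.map fun m ↦ y ^ oddCyclesOfSq m).prod =
      y ^ numOddCycles n (σ ^ 2) := by
    rw [numOddCycles_sq]
    induction σ.partition.parts using Multiset.induction_on with
    | empty => simp
    | cons m s ih => simp [pow_add, ih]
  simp only [pow_eq]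
  rw [← Finset.sum_fiberwise_of_maps_to' (t := Finset.range (n + 1))
    (fun σ _ ↦ Finset.mem_range_succ_iff.2 (numOddCycles_le (σ ^ 2))) fun k ↦ y ^ k]
  simp only [Finset.sum_const, nsmul_eq_mul, dnk]

end SquareOfCycle

section SignedAlphabet

open Finset PowerSeries

lemma derivative_prod_eq_sum_mul_prod {R ι : Type*} [CommRing R] (S : Finset ι) {W F : ι → R⟦X⟧}
    (hF : ∀ i, d⁄dX R (F i) = W i * F i) :
    d⁄dX R (∏ i ∈ S, F i) = (∑ i ∈ S, W i) * ∏ i ∈ S, F i := by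
  induction S using Finset.cons_induction with
  | empty => simp
  | cons i S hi ih =>
    rw [prod_cons, sum_cons, Derivation.leibniz, smul_eq_mul, smul_eq_mul, ih, hF]
    ring

lemma derivative_eq_mul_of_mul_eq_one {R : Type*} [CommRing R] {P F W : R⟦X⟧} (hF : P * F = 1)
    (hW : P * W = -d⁄dX R P) : d⁄dX R F = W * F := by
  have hd := congrArg (d⁄dX R) hF
  rw [Derivation.leibniz, derivative_one, smul_eq_mul, smul_eq_mul] at hd
  linear_combination F * hd - F ^ 2 * hW + (W * F - d⁄dX R F) * hF

variable {α : Type*} (ε : α → ℤˣ)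

/-- The product of the signs of the two members of an unordered pair. -/
def pairSign (s : Sym2 α) : ℤˣ := (s.map ε).mul

@[simp] lemma pairSign_mk (a b : α) : pairSign ε s(a, b) = ε a * ε b := rfl

/-- `d` is an admissible multiplicity of the unordered pair `s`, that is, it can be the number of
indices `i` with `{f i, f (π i)} = s` for an involution `π` and an enriched `π`-partition `f`. -/
def IsAdmissible (s : Sym2 α) (d : ℕ) : Prop :=
  s.IsDiag ∨ Even d ∧ (pairSign ε s = -1 → d ≤ 2)

/-- The generating function of the admissible multiplicities of an unordered pair. -/
def pairSeries (s : Sym2 α) : ℚ⟦X⟧ := mk fun d ↦ if IsAdmissible ε s d then 1 else 0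

/-- The logarithmic derivative of `pairSeries ε s`. -/
def pairLogDeriv (s : Sym2 α) : ℚ⟦X⟧ :=
  mk fun m ↦ if s.IsDiag then 1 else if Even m then 0 else 2 * ((pairSign ε s : ℤ) : ℚ) ^ (m / 2)

lemma constantCoeff_pairSeries (s : Sym2 α) : constantCoeff (pairSeries ε s) = 1 := by
  simp [← coeff_zero_eq_constantCoeff_apply, pairSeries, IsAdmissible]

lemma one_sub_X_sq_mul_pairLogDeriv {s : Sym2 α} (hs : ¬ s.IsDiag) :
    (1 - C ((pairSign ε s : ℤ) : ℚ) * X ^ 2) * pairLogDeriv ε s = 2 * X := by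
  have two : (2 : ℚ⟦X⟧) = C 2 := rfl
  ext m
  rw [two, coeff_C_mul, coeff_X, sub_mul, one_mul, map_sub, mul_assoc, coeff_C_mul,
    coeff_X_pow_mul', pairLogDeriv]
  simp only [hs, if_false, coeff_mk]
  rcases m with _ | _ | m
  · simp
  · simp
  · have : (m + 2) / 2 = m / 2 + 1 := by lia
    simp only [Nat.even_add_one, Nat.not_even_iff_odd, Nat.not_odd_iff_even, this,
      le_add_iff_nonneg_left, zero_le, ↓reduceIte, Nat.reduceSubDiff, mul_ite, mul_zero,
      Nat.add_eq_right, Nat.add_eq_zero_iff, one_ne_zero, and_false]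
    split_ifs <;> ring

lemma derivative_pairSeries (s : Sym2 α) :
    d⁄dX ℚ (pairSeries ε s) = pairLogDeriv ε s * pairSeries ε s := by
  have derivative_sq : d⁄dX ℚ (X ^ 2 : ℚ⟦X⟧) = 2 * X := by simp
  by_cases hs : s.IsDiag
  · have hF : pairSeries ε s = PowerSeries.mk 1 := by ext; simp [pairSeries, IsAdmissible, hs]
    have hW : pairLogDeriv ε s = PowerSeries.mk 1 := by ext; simp [pairLogDeriv, hs]
    have geom : (1 - X) * PowerSeries.mk 1 = (1 : ℚ⟦X⟧) :=
      (mul_comm _ _).trans (mk_one_mul_one_sub_eq_one ℚ)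
    rw [hF, hW]
    exact derivative_eq_mul_of_mul_eq_one geom (by simp [geom])
  have hW := one_sub_X_sq_mul_pairLogDeriv ε hs
  rcases Int.units_eq_one_or (pairSign ε s) with h | h
  · have hF : (1 - X ^ 2) * pairSeries ε s = 1 := by
      ext d
      rcases d with _ | _ | d <;>
        simp [pairSeries, IsAdmissible, hs, h, sub_mul, coeff_X_pow_mul', coeff_one,
          Nat.even_add_one]
    exact derivative_eq_mul_of_mul_eq_one hF (by simpa [h, derivative_sq] using hW)
  · have hF : pairSeries ε s = 1 + X ^ 2 := by
      ext d
      rcases d with _ | _ | _ | d <;>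
        simp [pairSeries, IsAdmissible, hs, h, coeff_one, coeff_X_pow]
    have hW' : (1 + X ^ 2) * pairLogDeriv ε s = 2 * X := by simpa [h] using hW
    rw [hF, mul_comm, hW', map_add, derivative_one, derivative_sq, zero_add]

variable [Fintype α]

/-- The `m`-th power sum of the signed alphabet `ε`: for `1 ≤ m`, the closed form of the coefficient
of `X ^ (m - 1)` in `∑ s, pairLogDeriv ε s`. -/
def signedPowerSum (m : ℕ) : ℚ :=
  if Odd m then Fintype.card α else (∑ a, ((ε a : ℤ) : ℚ) ^ (m / 2 - 1)) ^ 2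

lemma sum_filter_sym2_mk_eq [DecidableEq α] {M : Type*} [AddCommMonoid M] (F : α × α → M)
    (a b : α) : ∑ p with s(p.1, p.2) = s(a, b), F p = F (a, b) + if a = b then 0 else F (b, a) := by
  rcases eq_or_ne a b with rfl | hab
  · have fiber : ({p | s(p.1, p.2) = s(a, a)} : Finset (α × α)) = {(a, a)} := by ext ⟨x, y⟩; simp
    rw [fiber, sum_singleton, if_pos rfl, add_zero]
  · have fiber : ({p | s(p.1, p.2) = s(a, b)} : Finset (α × α)) = {(a, b), (b, a)} := by
      ext ⟨x, y⟩; simp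
    rw [fiber, sum_pair (by simp [hab]), if_neg hab]

lemma sum_sym2_add_ite_isDiag [DecidableEq α] {M : Type*} [AddCommMonoid M] (g : Sym2 α → M) :
    ∑ s : Sym2 α, (g s + if s.IsDiag then 0 else g s) = ∑ a, ∑ b, g s(a, b) := by
  rw [← Fintype.sum_prod_type' fun a b ↦ g s(a, b),
    ← sum_fiberwise univ (fun p : α × α ↦ s(p.1, p.2))]
  refine sum_congr rfl fun s _ ↦ ?_
  induction s using Sym2.ind with
  | _ a b =>
    rw [sum_filter_sym2_mk_eq fun p : α × α ↦ g s(p.1, p.2), Sym2.eq_swap (a := b)]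
    simp only [Sym2.mk_isDiag_iff]

lemma sum_pairLogDeriv :
    ∑ s, pairLogDeriv ε s = PowerSeries.mk fun m ↦ signedPowerSum ε (m + 1) := by
  ext m
  rw [map_sum, coeff_mk]
  simp only [pairLogDeriv, coeff_mk, signedPowerSum]
  rcases m.even_or_odd with hm | hm
  · rw [if_pos hm.add_one]
    calc ∑ s : Sym2 α, (if s.IsDiag then 1 else if Even m then 0
            else 2 * ((pairSign ε s : ℤ) : ℚ) ^ (m / 2))
        = ∑ s : Sym2 α, ((if s.IsDiag then 1 else 0) +
            if s.IsDiag then 0 else if s.IsDiag then 1 else 0) :=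
          sum_congr rfl fun s _ ↦ by split_ifs <;> simp
      _ = ∑ a : α, ∑ b, if a = b then 1 else 0 := by
          rw [sum_sym2_add_ite_isDiag]; simp only [Sym2.mk_isDiag_iff]
      _ = Fintype.card α := by simp
  · rw [if_neg (by simpa using hm.add_one), show (m + 1) / 2 - 1 = m / 2 by grind, sq, sum_mul_sum]
    calc ∑ s : Sym2 α, (if s.IsDiag then 1 else if Even m then 0
            else 2 * ((pairSign ε s : ℤ) : ℚ) ^ (m / 2))
        = ∑ s : Sym2 α, (((pairSign ε s : ℤ) : ℚ) ^ (m / 2) +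
            if s.IsDiag then 0 else ((pairSign ε s : ℤ) : ℚ) ^ (m / 2)) := by
          refine sum_congr rfl fun s _ ↦ ?_
          induction s using Sym2.ind with
          | _ a b =>
            rcases eq_or_ne a b with rfl | hab
            · simp
            · simp [hab, two_mul, hm]
      _ = ∑ a, ∑ b, ((ε a : ℤ) : ℚ) ^ (m / 2) * ((ε b : ℤ) : ℚ) ^ (m / 2) := by
          rw [sum_sym2_add_ite_isDiag]; simp [mul_pow]

theorem coeff_prod_pairSeries (n : ℕ) :
    coeff n (∏ s, pairSeries ε s) = cycleIndex (signedPowerSum ε) n := by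
  refine coeff_eq_cycleIndex ?_ ?_ n
  · rw [map_prod, prod_congr rfl fun s _ ↦ constantCoeff_pairSeries ε s, prod_const_one]
  · rw [derivative_prod_eq_sum_mul_prod univ (derivative_pairSeries ε), sum_pairLogDeriv]

end SignedAlphabet

section EnrichedPartitions

open Finset Equiv

lemma eq_of_monotone_of_card_fiber_eq {n : ℕ} {γ δ : Type*} [DecidableEq γ] [LinearOrder δ]
    {key : γ → δ} (hkey : Function.Injective key) {f g : Fin n → γ} (hf : Monotone (key ∘ f))
    (hg : Monotone (key ∘ g)) (hcard : ∀ c, #{i | f i = c} = #{i | g i = c}) : f = g := by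
  have fiberEquiv (c : γ) : Nonempty ({i // f i = c} ≃ {i // g i = c}) := by
    rw [← Fintype.card_eq, Fintype.card_subtype, Fintype.card_subtype, hcard c]
  let σ : Perm (Fin n) := ofFiberEquiv fun c ↦ (fiberEquiv c).some
  have hσ : f = g ∘ σ := funext fun i ↦ (ofFiberEquiv_map _ i).symm
  have key_eq : key ∘ g ∘ σ = key ∘ g := by
    rw [hσ] at hf
    exact Tuple.unique_monotone (f := key ∘ g) (τ := 1) hf hg
  exact hσ.trans (hkey.comp_left key_eq)

variable {n N : ℕ}

/-- `f` is an enriched `π`-partition in the sense of Petersen, with letters from the chain `Fin N`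
signed by `ε`: it increases weakly, and strictly wherever `π` fails to increase on a positive letter
or fails to decrease on a negative one. -/
def IsEnrichedPartition (ε : Fin N → ℤˣ) (π : Perm (Fin n)) (f : Fin n → Fin N) : Prop :=
  StrictMono fun i ↦ toLex (f i, (ε (f i) : ℤ) * ((π i : ℕ) : ℤ))

variable {ε : Fin N → ℤˣ} {π π' : Perm (Fin n)} {f f' : Fin n → Fin N}

lemma IsEnrichedPartition.sign_mul_lt (h : IsEnrichedPartition ε π f) {i j : Fin n} (hij : i < j)
    (hf : f i = f j) : (ε (f i) : ℤ) * (π i : ℕ) < (ε (f i) : ℤ) * (π j : ℕ) := by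
  have := Prod.Lex.toLex_lt_toLex.1 (h hij)
  rw [← hf] at this
  exact this.resolve_left (lt_irrefl _) |>.2

lemma IsEnrichedPartition.monotone (h : IsEnrichedPartition ε π f) : Monotone f :=
  fun _ _ hij ↦ Prod.Lex.monotone_fst _ _ (StrictMono.monotone h hij)

/-- The number of indices `i` with `(f i, f (π i)) = p`. -/
def cellCount (π : Perm (Fin n)) (f : Fin n → Fin N) (p : Fin N × Fin N) : ℕ :=
  #{i | (f i, f (π i)) = p}

/-- The number of indices `i` such that `{f i, f (π i)}` is the unordered pair `s`. -/
def pairCount (π : Perm (Fin n)) (f : Fin n → Fin N) (s : Sym2 (Fin N)) : ℕ :=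
  #{i | s(f i, f (π i)) = s}

lemma sum_pairCount (π : Perm (Fin n)) (f : Fin n → Fin N) : ∑ s, pairCount π f s = n := by
  simpa [pairCount] using (card_eq_sum_card_fiberwise (s := univ) (t := univ)
    (f := fun i ↦ s(f i, f (π i))) (fun _ _ ↦ mem_univ _)).symm

lemma apply_apply_of_mem_invSet (hπ : π ∈ invSet n) (i : Fin n) : π (π i) = i := by
  simpa [sq] using Perm.congr_fun (mem_filter.1 hπ).2 i

lemma cellCount_swap (hπ : π ∈ invSet n) (f : Fin n → Fin N) (p : Fin N × Fin N) :
    cellCount π f p.swap = cellCount π f p :=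
  card_bij' (fun i _ ↦ π i) (fun i _ ↦ π i)
    (by simp [Prod.ext_iff, apply_apply_of_mem_invSet hπ, and_comm])
    (by simp [Prod.ext_iff, apply_apply_of_mem_invSet hπ, and_comm])
    (by simp [apply_apply_of_mem_invSet hπ]) (by simp [apply_apply_of_mem_invSet hπ])

lemma pairCount_mk (hπ : π ∈ invSet n) (f : Fin n → Fin N) (a b : Fin N) :
    pairCount π f s(a, b) = if a = b then cellCount π f (a, b) else 2 * cellCount π f (a, b) := by
  have cells : pairCount π f s(a, b) = ∑ p with s(p.1, p.2) = s(a, b), cellCount π f p := by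
    rw [pairCount, card_eq_sum_card_fiberwise (f := fun i ↦ (f i, f (π i)))
      (t := {p | s(p.1, p.2) = s(a, b)}) (by simp [Set.MapsTo])]
    refine sum_congr rfl fun p hp ↦ ?_
    rw [cellCount, filter_filter]
    congr 1
    ext i
    simp only [mem_filter_univ] at hp ⊢
    exact ⟨And.right, fun hi ↦ ⟨by rw [← hp, ← hi], hi⟩⟩
  rw [cells, sum_filter_sym2_mk_eq, ← Prod.swap_prod_mk, cellCount_swap hπ]
  split_ifs <;> ring

lemma cellCount_le_one (hπ : π ∈ invSet n) (h : IsEnrichedPartition ε π f) {a b : Fin N}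
    (hab : ε a * ε b = -1) : cellCount π f (a, b) ≤ 1 := by
  refine card_le_one.2 fun i hi j hj ↦ ?_
  simp only [mem_filter_univ, Prod.mk.injEq] at hi hj
  by_contra hne
  wlog hij : i < j generalizing i j
  · exact this j i hj hi (Ne.symm hne) (lt_of_le_of_ne (not_lt.1 hij) (Ne.symm hne))
  have lt_a := h.sign_mul_lt hij (hi.1.trans hj.1.symm)
  have lt_b {k l : Fin n} (hkl : π k < π l) (hk : f (π k) = b) (hl : f (π l) = b) :
      (ε b : ℤ) * (k : ℕ) < (ε b : ℤ) * (l : ℕ) := by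
    simpa only [apply_apply_of_mem_invSet hπ, hk] using h.sign_mul_lt hkl (hk.trans hl.symm)
  rw [hi.1] at lt_a
  rcases Int.units_eq_one_or (ε a) with ha | ha
  · have hb : ε b = -1 := by simpa [ha] using hab
    have := lt_b (k := i) (l := j) (by simpa [ha] using lt_a) hi.2 hj.2
    simp only [hb, Units.val_neg, Units.val_one, neg_mul, one_mul, neg_lt_neg_iff, Nat.cast_lt,
      Fin.val_fin_lt] at this
    exact lt_asymm hij this
  · have hb : ε b = 1 := by simpa [ha] using hab
    have := lt_b (k := j) (l := i) (by simpa [ha] using lt_a) hj.2 hi.2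
    simp only [hb, Units.val_one, one_mul, Nat.cast_lt, Fin.val_fin_lt] at this
    exact lt_asymm hij this

lemma isAdmissible_pairCount (hπ : π ∈ invSet n) (h : IsEnrichedPartition ε π f)
    (s : Sym2 (Fin N)) : IsAdmissible ε s (pairCount π f s) := by
  induction s using Sym2.ind with
  | _ a b =>
    refine or_iff_not_imp_left.2 fun hs ↦ ?_
    rw [pairCount_mk hπ, if_neg (by simpa using hs)]
    exact ⟨even_two_mul _, fun hab ↦ by have := cellCount_le_one hπ h hab; lia⟩

/-- The sorting key for which the cells `(f i, f (π i))` of an enriched `π`-partition appear in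
weakly increasing order. -/
def cellKey (ε : Fin N → ℤˣ) (p : Fin N × Fin N) : Fin N ×ₗ ℤ :=
  toLex (p.1, (ε p.1 : ℤ) * (p.2 : ℕ))

lemma cellKey_injective (ε : Fin N → ℤˣ) : Function.Injective (cellKey ε) := by
  rintro ⟨a, b⟩ ⟨a', b'⟩ h
  obtain ⟨rfl, h⟩ := Prod.mk.inj (toLex.injective h)
  simpa [Fin.ext_iff] using h

lemma IsEnrichedPartition.monotone_cellKey (h : IsEnrichedPartition ε π f) :
    Monotone (cellKey ε ∘ fun i ↦ (f i, f (π i))) := by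
  refine monotone_iff_forall_lt.2 fun i j hij ↦ ?_
  rcases (h.monotone hij.le).lt_or_eq with hf | hf
  · exact Prod.Lex.toLex_le_toLex.2 (Or.inl hf)
  · refine Prod.Lex.toLex_le_toLex.2 (Or.inr ⟨hf, ?_⟩)
    have hlt := h.sign_mul_lt hij hf
    change (ε (f i) : ℤ) * (f (π i) : ℕ) ≤ (ε (f j) : ℤ) * (f (π j) : ℕ)
    rw [← hf]
    rcases Int.units_eq_one_or (ε (f i)) with hε | hε <;>
      simp only [hε, Units.val_one, Units.val_neg, one_mul, neg_mul, neg_lt_neg_iff,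
        neg_le_neg_iff, Nat.cast_lt, Nat.cast_le, Fin.val_fin_lt, Fin.val_fin_le] at hlt ⊢ <;>
      exact h.monotone hlt.le

lemma eq_of_pairCount_eq (hπ : π ∈ invSet n) (hπ' : π' ∈ invSet n)
    (h : IsEnrichedPartition ε π f) (h' : IsEnrichedPartition ε π' f')
    (hcount : pairCount π f = pairCount π' f') : π = π' ∧ f = f' := by
  have cells_eq : (fun i ↦ (f i, f (π i))) = fun i ↦ (f' i, f' (π' i)) := by
    refine eq_of_monotone_of_card_fiber_eq (cellKey_injective ε) h.monotone_cellKey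
      h'.monotone_cellKey fun p ↦ ?_
    have := congrFun hcount s(p.1, p.2)
    rw [pairCount_mk hπ, pairCount_mk hπ'] at this
    change cellCount π f p = cellCount π' f' p
    split_ifs at this <;> lia
  obtain rfl : f = f' := funext fun i ↦ congrArg Prod.fst (congrFun cells_eq i)
  have hcomp : f ∘ π = f ∘ π' := funext fun i ↦ congrArg Prod.snd (congrFun cells_eq i)
  let key (j : Fin n) : Fin N ×ₗ ℤ := toLex (f (π j), (ε (f (π j)) : ℤ) * (j : ℕ))
  have key_comp : key ∘ π = fun i ↦ toLex (f i, (ε (f i) : ℤ) * ((π i : ℕ) : ℤ)) :=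
    funext fun i ↦ by simp only [key, Function.comp_apply, apply_apply_of_mem_invSet hπ]
  have key_comp' : key ∘ π' = fun i ↦ toLex (f i, (ε (f i) : ℤ) * ((π' i : ℕ) : ℤ)) := by
    funext i
    have : f (π (π' i)) = f i := by
      rw [← Function.comp_apply (f := f), hcomp, Function.comp_apply, apply_apply_of_mem_invSet hπ']
    simp only [key, Function.comp_apply, this]
  have mono : StrictMono (key ∘ π) := key_comp ▸ h
  have mono' : StrictMono (key ∘ π') := key_comp' ▸ h'
  have key_injective : Function.Injective key := π.injective_comp key |>.1 mono.injective
  have := key_injective.comp_left (Tuple.unique_monotone mono.monotone mono'.monotone)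
  exact ⟨Equiv.ext (congrFun this), rfl⟩

end EnrichedPartitions

section Reconstruction

open Finset Equiv

variable {n N : ℕ} {ε : Fin N → ℤˣ} {A : Sym2 (Fin N) → ℕ}

/-- Abstract positions `(a, b, c)`: the `c`-th index `i` with `(f i, f (π i)) = (a, b)`, when the
ordered pairs `(a, b)` and `(b, a)` both have multiplicity `A s(a, b)`. -/
abbrev Position (A : Sym2 (Fin N) → ℕ) := Σ p : Fin N × Fin N, Fin (A s(p.1, p.2))

/-- The key by which positions are sorted. -/
def positionKey (ε : Fin N → ℤˣ) (x : Position A) : Fin N ×ₗ ℤ ×ₗ ℕ :=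
  toLex (x.1.1, toLex ((ε x.1.1 : ℤ) * (x.1.2 : ℕ), (x.2 : ℕ)))

lemma positionKey_injective (ε : Fin N → ℤˣ) :
    Function.Injective (positionKey ε : Position A → _) := by
  rintro ⟨⟨a, b⟩, c⟩ ⟨⟨a', b'⟩, c'⟩ h
  obtain ⟨rfl, h⟩ := Prod.mk.inj (toLex.injective h)
  obtain ⟨hb, hc⟩ := Prod.mk.inj (toLex.injective h)
  obtain rfl : b = b' := by simpa [Fin.ext_iff] using hb
  exact congrArg (Sigma.mk (a, b)) (Fin.ext hc)

/-- The involution `π` on positions: it exchanges the cells `(a, b)` and `(b, a)`, increasingly if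
both letters are positive and decreasingly otherwise. -/
def Position.swap (ε : Fin N → ℤˣ) (x : Position A) : Position A :=
  ⟨x.1.swap, Fin.cast (congrArg A Sym2.eq_swap) <|
    if ε x.1.1 = 1 ∧ ε x.1.2 = 1 then x.2 else x.2.rev⟩

lemma Position.swap_involutive (ε : Fin N → ℤˣ) :
    Function.Involutive (Position.swap ε : Position A → _) := by
  rintro ⟨⟨a, b⟩, c⟩
  refine positionKey_injective ε ?_
  simp only [positionKey, Position.swap, Prod.fst_swap, Prod.snd_swap]
  congr 3
  split_ifs <;> simp [Fin.rev] <;> grind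

lemma positionKey_swap_lt (hA : ∀ s, pairSign ε s = -1 → A s ≤ 1) {x y : Position A}
    (hxy : positionKey ε x < positionKey ε y) (h : x.1.1 = y.1.1) :
    (ε x.1.1 = 1 ∧ positionKey ε (x.swap ε) < positionKey ε (y.swap ε)) ∨
      (ε x.1.1 = -1 ∧ positionKey ε (y.swap ε) < positionKey ε (x.swap ε)) := by
  obtain ⟨⟨a, b⟩, c⟩ := x
  obtain ⟨⟨a', b'⟩, c'⟩ := y
  obtain rfl : a = a' := h
  simp only [positionKey, Prod.Lex.toLex_lt_toLex, lt_irrefl, false_or, true_and] at hxy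
  rcases hxy with hb | ⟨hb, hc⟩
  · refine (Int.units_eq_one_or (ε a)).imp (fun ha ↦ ⟨ha, ?_⟩) fun ha ↦ ⟨ha, ?_⟩ <;>
      exact Prod.Lex.toLex_lt_toLex.2 (Or.inl (by simpa [ha, Position.swap] using hb))
  · obtain rfl : b = b' := by simpa [Fin.ext_iff] using hb
    have key_lt {z w : Fin (A s(b, a))} (hzw : z < w) :
        positionKey ε (⟨(b, a), z⟩ : Position A) < positionKey ε ⟨(b, a), w⟩ := by
      simpa [positionKey, Prod.Lex.toLex_lt_toLex] using hzw
    refine (Int.units_eq_one_or (ε a)).imp (fun ha ↦ ⟨ha, key_lt ?_⟩) fun ha ↦ ⟨ha, key_lt ?_⟩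
    · have hb : ε b = 1 := by
        refine (Int.units_eq_one_or (ε b)).resolve_right fun hb ↦ ?_
        have := hA s(a, b) (by simp [ha, hb])
        have := c'.isLt
        lia
      simpa [ha, hb] using hc
    · simpa [ha] using hc

lemma exists_equiv_strictMono_comp {T γ : Type*} [Fintype T] [LinearOrder γ] {key : T → γ}
    (hkey : Function.Injective key) (hcard : Fintype.card T = n) :
    ∃ e : Fin n ≃ T, StrictMono (key ∘ e) := by
  let _ := LinearOrder.lift' key hkey
  exact ⟨(Fintype.orderIsoFinOfCardEq T hcard).toEquiv,
    fun i j hij ↦ (Fintype.orderIsoFinOfCardEq T hcard).strictMono hij⟩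

/-- The common multiplicity of the ordered pairs `(a, b)` and `(b, a)` when `s(a, b)` has
multiplicity `d s(a, b)`. -/
def cellSize (d : Sym2 (Fin N) → ℕ) (s : Sym2 (Fin N)) : ℕ :=
  if s.IsDiag then d s else d s / 2

lemma cellSize_add_ite {d : Sym2 (Fin N) → ℕ} {s} (hd : IsAdmissible ε s (d s)) :
    (cellSize d s + if s.IsDiag then 0 else cellSize d s) = d s := by
  unfold cellSize
  split_ifs with hs
  · rfl
  · have := (hd.resolve_left hs).1; grind

lemma cellSize_le_one {d : Sym2 (Fin N) → ℕ} {s} (hd : IsAdmissible ε s (d s))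
    (hs : pairSign ε s = -1) : cellSize d s ≤ 1 := by
  have hdiag : ¬ s.IsDiag := by
    induction s using Sym2.ind with
    | _ a b =>
      intro h
      obtain rfl : a = b := by simpa using h
      simp [Int.units_mul_self] at hs
  have := (hd.resolve_left hdiag).2 hs
  rw [cellSize, if_neg hdiag]
  lia

lemma card_filter_position (d : Sym2 (Fin N) → ℕ) (s : Sym2 (Fin N)) :
    #{x : Position (cellSize d) | s(x.1.1, x.1.2) = s} =
      cellSize d s + if s.IsDiag then 0 else cellSize d s := by
  have fiber : ({x : Position (cellSize d) | s(x.1.1, x.1.2) = s} : Finset _) =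
      ({p | s(p.1, p.2) = s} : Finset (Fin N × Fin N)).sigma fun _ ↦ univ := by
    ext; simp
  rw [fiber, card_sigma]
  simp only [card_univ, Fintype.card_fin]
  induction s using Sym2.ind with
  | _ a b =>
    rw [sum_filter_sym2_mk_eq fun p : Fin N × Fin N ↦ cellSize d s(p.1, p.2),
      Sym2.eq_swap (a := b)]
    simp only [Sym2.mk_isDiag_iff]

lemma card_position_eq_sum {d : Sym2 (Fin N) → ℕ} (hd : ∀ s, IsAdmissible ε s (d s)) :
    Fintype.card (Position (cellSize d)) = ∑ s, d s := by
  rw [Fintype.card_sigma]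
  simp only [Fintype.card_fin]
  rw [Fintype.sum_prod_type' fun a b ↦ cellSize d s(a, b), ← sum_sym2_add_ite_isDiag]
  exact sum_congr rfl fun s _ ↦ cellSize_add_ite (hd s)

theorem exists_pairCount_eq {d : Sym2 (Fin N) → ℕ} (hd : ∀ s, IsAdmissible ε s (d s))
    (hsum : ∑ s, d s = n) :
    ∃ π ∈ invSet n, ∃ f, IsEnrichedPartition ε π f ∧ pairCount π f = d := by
  obtain ⟨e, he⟩ := exists_equiv_strictMono_comp (positionKey_injective ε)
    ((card_position_eq_sum hd).trans hsum)
  let π : Perm (Fin n) := (e.trans (Position.swap_involutive ε).toPerm).trans e.symm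
  have e_π (i : Fin n) : e (π i) = (e i).swap ε := e.apply_symm_apply _
  refine ⟨π, ?_, fun i ↦ (e i).1.1, ?_, ?_⟩
  · refine mem_filter.2 ⟨mem_univ _, Equiv.ext fun i ↦ e.injective ?_⟩
    rw [sq, Perm.mul_apply, e_π, e_π, Position.swap_involutive, Perm.one_apply]
  · intro i j hij
    have f_le : (e i).1.1 ≤ (e j).1.1 := Prod.Lex.monotone_fst (positionKey ε (e i)) _ (he hij).le
    refine Prod.Lex.toLex_lt_toLex.2 (f_le.lt_or_eq.imp_right fun hf ↦ ⟨hf, ?_⟩)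
    have key_π (k : Fin n) : positionKey ε ((e k).swap ε) = (positionKey ε ∘ e) (π k) := by
      rw [Function.comp_apply, e_π]
    change (ε (e i).1.1 : ℤ) * (π i : ℕ) < (ε (e j).1.1 : ℤ) * (π j : ℕ)
    rw [← hf]
    rcases positionKey_swap_lt (fun s ↦ cellSize_le_one (hd s)) (he hij) hf with ⟨hε, h⟩ | ⟨hε, h⟩
    all_goals
      rw [key_π, key_π, he.lt_iff_lt] at h
      simpa [hε] using h
  · funext s
    have count : pairCount π (fun i ↦ (e i).1.1) s =
        #{x : Position (cellSize d) | s(x.1.1, x.1.2) = s} := by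
      refine card_equiv e fun i ↦ ?_
      simp only [mem_filter_univ, e_π]
      rfl
    rw [count, card_filter_position, cellSize_add_ite (hd s)]

end Reconstruction

section InvolutionCount

open Finset PowerSeries Equiv

variable {N : ℕ} (ε : Fin N → ℤˣ) (n : ℕ)

theorem coeff_prod_pairSeries_eq_sum_card :
    coeff n (∏ s, pairSeries ε s) =
      ∑ π ∈ invSet n, (#{f | IsEnrichedPartition ε π f} : ℚ) := by
  have coeff_prod (l : Sym2 (Fin N) →₀ ℕ) :
      ∏ s, coeff (l s) (pairSeries ε s) = if ∀ s, IsAdmissible ε s (l s) then 1 else 0 := by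
    simp only [pairSeries, coeff_mk, prod_ite_zero, mem_univ, forall_const, prod_const_one]
  rw [PowerSeries.coeff_prod, sum_congr rfl fun l _ ↦ coeff_prod l, sum_boole, ← Nat.cast_sum,
    ← card_sigma]
  congr 1
  symm
  refine card_bij (fun x _ ↦ Finsupp.equivFunOnFinite.symm (pairCount x.1 x.2)) ?_ ?_ ?_
  · rintro ⟨π, f⟩ hx
    obtain ⟨hπ, hf⟩ := mem_sigma.1 hx
    simpa [mem_finsuppAntidiag, sum_pairCount] using isAdmissible_pairCount hπ (by simpa using hf)
  · rintro ⟨π, f⟩ hx ⟨π', f'⟩ hx' hcount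
    obtain ⟨hπ, hf⟩ := mem_sigma.1 hx
    obtain ⟨hπ', hf'⟩ := mem_sigma.1 hx'
    obtain ⟨rfl, rfl⟩ := eq_of_pairCount_eq hπ hπ' (by simpa using hf) (by simpa using hf')
      (Finsupp.equivFunOnFinite.symm.injective hcount)
    rfl
  · intro l hl
    obtain ⟨hl, hadm⟩ := mem_filter.1 hl
    obtain ⟨π, hπ, f, hf, hcount⟩ :=
      exists_pairCount_eq (n := n) hadm (by simpa [mem_finsuppAntidiag] using hl)
    exact ⟨⟨π, f⟩, by simp [hπ, hf], by ext s; exact congrFun hcount s⟩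

theorem factorial_mul_sum_card_isEnrichedPartition :
    (n.factorial : ℚ) * ∑ π ∈ invSet n, (#{f | IsEnrichedPartition ε π f} : ℚ) =
      ∑ σ : Perm (Fin n), (σ.partition.parts.map (signedPowerSum ε)).prod := by
  rw [← coeff_prod_pairSeries_eq_sum_card, coeff_prod_pairSeries, sum_perm_prod_map_parts,
    Fintype.card_fin]

end InvolutionCount

section AlternatingSigns

open Finset Equiv

/-- The signs `+, -, +, …` of the letters `0 < 1 < 2 < ⋯`. -/
def alternatingSign {N : ℕ} (a : Fin N) : ℤˣ := (-1) ^ (a : ℕ)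

lemma signedPowerSum_alternatingSign (k : ℕ) {m : ℕ} (hm : 0 < m) :
    signedPowerSum (alternatingSign (N := 2 * k + 1)) m =
      ((2 * k + 1 : ℕ) : ℚ) ^ oddCyclesOfSq m := by
  have alternating_sum : ∑ a : Fin (2 * k + 1), (-1 : ℚ) ^ (a : ℕ) = 1 := by
    rw [Fin.sum_univ_eq_sum_range fun i ↦ (-1 : ℚ) ^ i]
    exact (neg_one_geom_sum).trans (if_neg (by simp))
  rw [signedPowerSum, oddCyclesOfSq, Fintype.card_fin]
  split_ifs with hodd htwo
  · rw [pow_one]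
  · have : Even (m / 2 - 1) := by grind
    simp [alternatingSign, pow_right_comm _ _ (m / 2 - 1), this]
  · have : Odd (m / 2 - 1) := by grind
    simp [alternatingSign, pow_right_comm _ _ (m / 2 - 1), this, alternating_sum]

theorem sum_card_isEnrichedPartition_alternatingSign (n k : ℕ) :
    (n.factorial : ℚ) * ∑ π ∈ invSet n,
        (#{f | IsEnrichedPartition (alternatingSign (N := 2 * k + 1)) π f} : ℚ) =
      ∑ j ∈ range (n + 1), (dnk n j : ℚ) * ((2 * k + 1 : ℕ) : ℚ) ^ j := by
  rw [factorial_mul_sum_card_isEnrichedPartition, sum_dnk_mul_pow]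
  refine sum_congr rfl fun σ _ ↦ congrArg Multiset.prod (Multiset.map_congr rfl fun m hm ↦ ?_)
  exact signedPowerSum_alternatingSign k (σ.partition.parts_pos hm)

end AlternatingSigns

section Chains

open Finset PowerSeries

/-- The relation between consecutive letters `u`, `v` of an enriched partition whose even letters
are positive and whose odd letters are negative; `d` says that there is a descent between them. -/
def ChainStep (d : Prop) (u v : ℕ) : Prop := u < v ∨ u = v ∧ (Even v ↔ ¬ d)

/-- The number of words `u₀, …, u_m = v` of letters satisfying `ChainStep (D i) uᵢ uᵢ₊₁` for all
`i < m`. -/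
def chainCount (D : ℕ → Prop) : ℕ → ℕ → ℕ
  | 0, _ => 1
  | m + 1, v => ∑ u ∈ range (if Even v ↔ ¬ D m then v + 1 else v), chainCount D m u

lemma chainStep_iff_mem_range {d : Prop} {u v : ℕ} :
    ChainStep d u v ↔ u ∈ range (if Even v ↔ ¬ d then v + 1 else v) := by
  rw [ChainStep, mem_range]
  split_ifs with h <;> grind

variable (D : ℕ → Prop)

lemma card_filter_chainStep_succ {N : ℕ} (m : ℕ) (v : Fin N) :
    #{f : Fin (m + 2) → Fin N | (∀ i : Fin (m + 1), ChainStep (D i) (f i.castSucc) (f i.succ)) ∧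
        f (Fin.last (m + 1)) = v} =
      #{g : Fin (m + 1) → Fin N | (∀ i : Fin m, ChainStep (D i) (g i.castSucc) (g i.succ)) ∧
        ChainStep (D m) (g (Fin.last m)) v} := by
  refine card_nbij' (fun f ↦ Fin.init f) (fun g ↦ Fin.snoc g v) ?_ ?_ ?_ ?_
  · intro f hf
    obtain ⟨steps, rfl⟩ := (mem_filter_univ _).1 hf
    simpa [Fin.forall_fin_succ', Fin.init] using steps
  · intro g hg
    simpa [Fin.forall_fin_succ', Fin.succ_castSucc, -Fin.castSucc_succ] using hg
  · intro f hf
    obtain ⟨-, rfl⟩ := (mem_filter_univ _).1 hf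
    exact Fin.snoc_init_self f
  · intro g _
    exact Fin.init_snoc _ _

lemma card_filter_chainStep {N : ℕ} (m : ℕ) (v : Fin N) :
    #{f : Fin (m + 1) → Fin N | (∀ i : Fin m, ChainStep (D i) (f i.castSucc) (f i.succ)) ∧
      f (Fin.last m) = v} = chainCount D m v := by
  induction m generalizing v with
  | zero =>
    refine card_eq_one.2 ⟨fun _ ↦ v, ?_⟩
    ext f
    simp [funext_iff, Fin.forall_fin_one]
  | succ m ih =>
    have fiber (u : Fin N) (hu : ChainStep (D m) u v) :
        #{g ∈ {g : Fin (m + 1) → Fin N | (∀ i : Fin m, ChainStep (D i) (g i.castSucc) (g i.succ)) ∧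
          ChainStep (D m) (g (Fin.last m)) v} | g (Fin.last m) = u} = chainCount D m u := by
      rw [← ih u, filter_filter]
      congr 1
      ext g
      simp only [mem_filter_univ]
      exact ⟨fun h ↦ ⟨h.1.1, h.2⟩, fun h ↦ ⟨⟨h.1, h.2 ▸ hu⟩, h.2⟩⟩
    rw [card_filter_chainStep_succ, card_eq_sum_card_fiberwise (f := fun g ↦ g (Fin.last m))
      (t := {u : Fin N | ChainStep (D m) u v}) (fun g hg ↦ by simpa using (mem_filter.1 hg).2.2),
      sum_congr rfl fun u hu ↦ fiber u (by simpa using hu), chainCount]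
    refine sum_nbij (fun u ↦ (u : ℕ)) ?_ Fin.val_injective.injOn ?_ fun _ _ ↦ rfl
    · exact fun u hu ↦ chainStep_iff_mem_range.1 (by simpa using hu)
    · intro u hu
      have hstep : ChainStep (D m) u v := chainStep_iff_mem_range.2 hu
      have huv : u ≤ v := hstep.elim le_of_lt fun h ↦ h.1.le
      exact ⟨⟨u, huv.trans_lt v.isLt⟩, by simpa using hstep, rfl⟩

lemma card_filter_forall_chainStep {m : ℕ} (hm : ¬ D m) (k : ℕ) :
    #{f : Fin (m + 1) → Fin (2 * k + 1) | ∀ i : Fin m, ChainStep (D i) (f i.castSucc) (f i.succ)} =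
      chainCount D (m + 1) (2 * k) := by
  rw [card_eq_sum_card_fiberwise (f := fun f ↦ f (Fin.last m)) (t := univ) (by simp [Set.MapsTo])]
  simp only [filter_filter, card_filter_chainStep, Fin.sum_univ_eq_sum_range (chainCount D m)]
  simp [chainCount, hm]

/-- The generating function of the chains ending in an even letter, `2 * j` contributing to
`X ^ j`. -/
def evenSeries (m : ℕ) : ℚ⟦X⟧ := PowerSeries.mk fun j ↦ (chainCount D m (2 * j) : ℚ)

/-- The generating function of the chains ending in an odd letter, `2 * j - 1` contributing to
`X ^ j`. -/
def oddSeries (m : ℕ) : ℚ⟦X⟧ := X * PowerSeries.mk fun j ↦ (chainCount D m (2 * j + 1) : ℚ)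

/-- The step from index `m - 1` to `m` is an ascent; by convention this holds for `m = 0`. -/
def AscentBefore : ℕ → Prop
  | 0 => True
  | m + 1 => ¬ D m

lemma one_sub_X_mul_evenSeries_zero : (1 - X) * evenSeries D 0 = 1 := by
  have evenSeries_zero : evenSeries D 0 = PowerSeries.mk 1 := by
    ext
    simp [evenSeries, chainCount]
  rw [evenSeries_zero, mul_comm, mk_one_mul_one_sub_eq_one]

variable {D} {m : ℕ}

lemma one_sub_X_mul_evenSeries_succ_of_not (h : ¬ D m) :
    (1 - X) * evenSeries D (m + 1) = evenSeries D m + oddSeries D m := by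
  ext j
  rcases j with _ | j
  · simp [evenSeries, oddSeries, chainCount, h, sub_mul]
  · simp only [evenSeries, oddSeries, chainCount, h, even_two, Even.mul_right, not_false_eq_true,
      ↓reduceIte, sum_range_succ, Nat.cast_add, Nat.cast_sum, sub_mul, one_mul, map_sub, map_add,
      coeff_mk, mul_add, mul_one, coeff_succ_X_mul]
    ring

lemma one_sub_X_mul_evenSeries_succ (h : D m) :
    (1 - X) * evenSeries D (m + 1) = X * evenSeries D m + oddSeries D m := by
  ext j
  rcases j with _ | j
  · simp [evenSeries, oddSeries, chainCount, h, sub_mul]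
  · simp only [evenSeries, oddSeries, chainCount, h, even_two, Even.mul_right, not_true_eq_false,
      iff_false, ↓reduceIte, sum_range_succ, Nat.cast_sum, sub_mul, one_mul, map_sub, map_add,
      coeff_mk, mul_add, mul_one, coeff_succ_X_mul]
    ring

lemma oddSeries_of_ascentBefore (h : AscentBefore D m) : oddSeries D m = X * evenSeries D m := by
  rcases m with _ | m
  · rfl
  · have hm : ¬ D m := h
    simp [evenSeries, oddSeries, chainCount, hm]

lemma oddSeries_of_not_ascentBefore (h : ¬ AscentBefore D m) : oddSeries D m = evenSeries D m := by
  rcases m with _ | m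
  · exact absurd trivial h
  · have hm : D m := not_not.1 h
    ext j
    rcases j with _ | j <;> simp [evenSeries, oddSeries, chainCount, hm, coeff_succ_X_mul, mul_add]

variable (D)

/-- The number of left peaks before index `m` of a word with descent set `D`. -/
def leftPeakCount (m : ℕ) : ℕ := Nat.count (fun i ↦ AscentBefore D i ∧ D i) m

lemma evenSeries_closed_form (m : ℕ) :
    (AscentBefore D m → ∃ r, m = 2 * leftPeakCount D m + r ∧
      (1 - X) ^ (m + 1) * evenSeries D m = (4 * X) ^ leftPeakCount D m * (1 + X) ^ r) ∧
    (¬ AscentBefore D m → ∃ r, m + 1 = 2 * leftPeakCount D m + r ∧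
      2 * (1 - X) ^ (m + 1) * evenSeries D m = (4 * X) ^ leftPeakCount D m * (1 + X) ^ r) := by
  induction m with
  | zero =>
    exact ⟨fun _ ↦ ⟨0, by simp [leftPeakCount],
      by simpa [leftPeakCount] using one_sub_X_mul_evenSeries_zero D⟩, fun h ↦ absurd trivial h⟩
  | succ m ih =>
    have count_succ : leftPeakCount D (m + 1) =
      leftPeakCount D m + if AscentBefore D m ∧ D m then 1 else 0 := Nat.count_succ _ _
    rw [count_succ]
    by_cases hD : D m <;> by_cases hA : AscentBefore D m
    · obtain ⟨r, hr, ih⟩ := ih.1 hA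
      refine ⟨fun h ↦ absurd hD h, fun _ ↦ ⟨r, by rw [if_pos ⟨hA, hD⟩]; lia, ?_⟩⟩
      have hrec := one_sub_X_mul_evenSeries_succ hD
      rw [oddSeries_of_ascentBefore hA] at hrec
      rw [if_pos ⟨hA, hD⟩]
      linear_combination 2 * (1 - X) ^ (m + 1) * hrec + 4 * X * ih
    · obtain ⟨r, hr, ih⟩ := ih.2 hA
      refine ⟨fun h ↦ absurd hD h, fun _ ↦ ⟨r + 1, by rw [if_neg fun h ↦ hA h.1]; lia, ?_⟩⟩
      have hrec := one_sub_X_mul_evenSeries_succ hD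
      rw [oddSeries_of_not_ascentBefore hA] at hrec
      rw [if_neg fun h ↦ hA h.1]
      linear_combination 2 * (1 - X) ^ (m + 1) * hrec + (1 + X) * ih
    · obtain ⟨r, hr, ih⟩ := ih.1 hA
      refine ⟨fun _ ↦ ⟨r + 1, by rw [if_neg fun h ↦ hD h.2]; lia, ?_⟩, fun h ↦ absurd hD h⟩
      have hrec := one_sub_X_mul_evenSeries_succ_of_not hD
      rw [oddSeries_of_ascentBefore hA] at hrec
      rw [if_neg fun h ↦ hD h.2]
      linear_combination (1 - X) ^ (m + 1) * hrec + (1 + X) * ih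
    · obtain ⟨r, hr, ih⟩ := ih.2 hA
      refine ⟨fun _ ↦ ⟨r, by rw [if_neg fun h ↦ hD h.2]; lia, ?_⟩, fun h ↦ absurd hD h⟩
      have hrec := one_sub_X_mul_evenSeries_succ_of_not hD
      rw [oddSeries_of_not_ascentBefore hA] at hrec
      rw [if_neg fun h ↦ hD h.2]
      linear_combination (1 - X) ^ (m + 1) * hrec + ih

variable {D} in
theorem one_sub_X_pow_mul_evenSeries (h : AscentBefore D m) :
    (1 - X) ^ (m + 1) * evenSeries D m =
      (4 * X) ^ leftPeakCount D m * (1 + X) ^ (m - 2 * leftPeakCount D m) := by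
  obtain ⟨r, hr, heq⟩ := (evenSeries_closed_form D m).1 h
  rw [heq, show m - 2 * leftPeakCount D m = r by lia]

end Chains

section LeftPeaks

open Finset PowerSeries Equiv

variable {n : ℕ}

/-- `π i > π (i + 1)`, for `0 ≤ i` and `i + 1 < n` (indices start at `0`). -/
def IsDescent (π : Perm (Fin n)) (i : ℕ) : Prop :=
  ∃ h : i + 1 < n, π ⟨i + 1, h⟩ < π ⟨i, i.lt_succ_self.trans h⟩

lemma oneLine_succ (π : Perm (Fin n)) {i : ℕ} (hi : i < n) :
    oneLine n π (i + 1) = (π ⟨i, hi⟩ : ℕ) + 1 := by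
  simp [oneLine, hi]

lemma ascentBefore_isDescent_self (π : Perm (Fin n)) : AscentBefore (IsDescent π) n := by
  rcases n with _ | n
  · trivial
  · exact fun h ↦ lt_irrefl _ h.1

lemma oneLine_lt_oneLine_succ_iff (π : Perm (Fin n)) {i : ℕ} (hi : i < n) :
    oneLine n π i < oneLine n π (i + 1) ↔ AscentBefore (IsDescent π) i := by
  rcases i with _ | i
  · rw [oneLine_succ π hi]
    simp [oneLine, AscentBefore]
  · have hne : π ⟨i, i.lt_succ_self.trans hi⟩ ≠ π ⟨i + 1, hi⟩ := by simp
    simp [oneLine_succ π hi, oneLine_succ π (i.lt_succ_self.trans hi), AscentBefore, IsDescent, hi,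
      hne.le_iff_lt]

lemma oneLine_succ_lt_oneLine_iff (π : Perm (Fin n)) {i : ℕ} (hi : i + 1 < n) :
    oneLine n π (i + 2) < oneLine n π (i + 1) ↔ IsDescent π i := by
  simp [oneLine_succ π hi, oneLine_succ π (i.lt_succ_self.trans hi), IsDescent, hi]

lemma lpk_eq_leftPeakCount (π : Perm (Fin n)) : lpk n π = leftPeakCount (IsDescent π) n := by
  rw [leftPeakCount, Nat.count_eq_card_filter_range]
  symm
  refine card_bij (fun i _ ↦ i + 1) ?_ (by simp) ?_
  · intro i hi
    obtain ⟨hin, hA, hD⟩ : i < n ∧ AscentBefore (IsDescent π) i ∧ IsDescent π i := by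
      simpa using hi
    have hi' := hD.1
    exact mem_filter.2 ⟨mem_Icc.2 (by lia), (oneLine_lt_oneLine_succ_iff π hin).2 hA,
      (oneLine_succ_lt_oneLine_iff π hi').2 hD⟩
  · intro j hj
    obtain ⟨hmem, hA, hD⟩ := mem_filter.1 hj
    rw [mem_Icc] at hmem
    obtain ⟨i, rfl⟩ := Nat.exists_eq_add_of_le' hmem.1
    refine ⟨i, mem_filter.2 ⟨mem_range.2 (by lia), ?_, ?_⟩, rfl⟩
    · exact (oneLine_lt_oneLine_succ_iff π (by lia)).1 hA
    · exact (oneLine_succ_lt_oneLine_iff π (by lia)).1 hD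

lemma isEnrichedPartition_alternatingSign_iff {m N : ℕ} {π : Perm (Fin (m + 1))}
    {f : Fin (m + 1) → Fin N} : IsEnrichedPartition alternatingSign π f ↔
      ∀ i : Fin m, ChainStep (IsDescent π i) (f i.castSucc) (f i.succ) := by
  refine Fin.strictMono_iff_lt_succ.trans (forall_congr' fun i ↦ ?_)
  have descent_iff : IsDescent π i ↔ π i.succ < π i.castSucc := by
    simp only [IsDescent, add_lt_add_iff_right, i.isLt, exists_true_left]
    rfl
  have hne : π i.castSucc ≠ π i.succ := by simp [Fin.castSucc_lt_succ.ne]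
  rw [Prod.Lex.toLex_lt_toLex, ChainStep, Fin.lt_def, Fin.ext_iff, descent_iff, not_lt]
  refine or_congr_right (and_congr_right fun hf ↦ ?_)
  have hf : f i.castSucc = f i.succ := Fin.ext hf
  rcases Nat.even_or_odd (f i.succ) with h | h
  · simp [hf, alternatingSign, h, hne.le_iff_lt]
  · simp [hf, alternatingSign, h, Nat.not_even_iff_odd.2 h]

lemma card_isEnrichedPartition_alternatingSign (π : Perm (Fin n)) (k : ℕ) :
    #{f | IsEnrichedPartition (alternatingSign (N := 2 * k + 1)) π f} =
      chainCount (IsDescent π) n (2 * k) := by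
  rcases n with _ | m
  · simp [chainCount, IsEnrichedPartition, Subsingleton.strictMono]
  · simp only [isEnrichedPartition_alternatingSign_iff]
    exact card_filter_forall_chainStep _ (ascentBefore_isDescent_self π) k

theorem one_sub_X_pow_mul_mk_card_isEnrichedPartition (π : Perm (Fin n)) :
    (1 - X) ^ (n + 1) * (PowerSeries.mk fun k ↦
        (#{f | IsEnrichedPartition (alternatingSign (N := 2 * k + 1)) π f} : ℚ)) =
      (4 * X) ^ lpk n π * (1 + X) ^ (n - 2 * lpk n π) := by
  simp only [card_isEnrichedPartition_alternatingSign, lpk_eq_leftPeakCount]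
  exact one_sub_X_pow_mul_evenSeries (ascentBefore_isDescent_self π)

end LeftPeaks

section Assembly

open Finset

lemma one_sub_X_pow_mul_mk_sum_dnk_mul_pow (n : ℕ) {B : ℕ → Polynomial ℚ}
    (hB : ∀ m, (B m : PowerSeries ℚ) = (1 - PowerSeries.X) ^ (m + 1) *
      PowerSeries.mk (fun k ↦ ((2 * k + 1 : ℕ) : ℚ) ^ m)) :
    (1 - PowerSeries.X) ^ (n + 1) *
        (PowerSeries.mk fun k ↦ ∑ j ∈ range (n + 1), (dnk n j : ℚ) * ((2 * k + 1 : ℕ) : ℚ) ^ j) =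
      ((∑ j ∈ range (n + 1), (dnk n j : Polynomial ℚ) * B j * (1 - Polynomial.X) ^ (n - j) :
        Polynomial ℚ) : PowerSeries ℚ) := by
  have mk_sum : (PowerSeries.mk fun k ↦ ∑ j ∈ range (n + 1), (dnk n j : ℚ) *
        ((2 * k + 1 : ℕ) : ℚ) ^ j) = ∑ j ∈ range (n + 1), (dnk n j : PowerSeries ℚ) *
          PowerSeries.mk (fun k ↦ ((2 * k + 1 : ℕ) : ℚ) ^ j) := by
    ext k
    simp [← nsmul_eq_mul]
  rw [mk_sum, mul_sum, ← Polynomial.coeToPowerSeries.ringHom_apply, map_sum]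
  refine sum_congr rfl fun j hj ↦ ?_
  have hn : n + 1 = (j + 1) + (n - j) := by grind
  simp only [map_mul, map_pow, map_sub, map_one, map_natCast,
    Polynomial.coeToPowerSeries.ringHom_apply, Polynomial.coe_X, hB]
  rw [hn, pow_add]
  ring

lemma one_sub_X_pow_mul_mk_sum_card_isEnrichedPartition (n : ℕ) :
    (1 - PowerSeries.X) ^ (n + 1) * (PowerSeries.mk fun k ↦ (n.factorial : ℚ) * ∑ π ∈ invSet n,
        (#{f | IsEnrichedPartition (alternatingSign (N := 2 * k + 1)) π f} : ℚ)) =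
      ((n.factorial * ∑ π ∈ invSet n, 4 ^ lpk n π * Polynomial.X ^ lpk n π *
        (1 + Polynomial.X) ^ (n - 2 * lpk n π) : Polynomial ℚ) : PowerSeries ℚ) := by
  have mk_sum : (PowerSeries.mk fun k ↦ (n.factorial : ℚ) * ∑ π ∈ invSet n,
        (#{f | IsEnrichedPartition (alternatingSign (N := 2 * k + 1)) π f} : ℚ)) =
      n.factorial * ∑ π ∈ invSet n, PowerSeries.mk fun k ↦
        (#{f | IsEnrichedPartition (alternatingSign (N := 2 * k + 1)) π f} : ℚ) := by
    ext k
    simp [← nsmul_eq_mul]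
  rw [mk_sum, mul_left_comm, mul_sum, ← Polynomial.coeToPowerSeries.ringHom_apply]
  simp only [one_sub_X_pow_mul_mk_card_isEnrichedPartition, mul_pow, map_mul, map_sum, map_pow,
    map_add, map_one, map_ofNat, map_natCast, Polynomial.coeToPowerSeries.ringHom_apply,
    Polynomial.coe_X]

end Assembly

theorem stmt14 (n : ℕ) (hn : 1 ≤ n) (B : ℕ → Polynomial ℚ)
    (hB : ∀ m : ℕ, ((B m : PowerSeries ℚ))
      = (1 - PowerSeries.X) ^ (m + 1)
          * PowerSeries.mk (fun k => ((2 * k + 1 : ℕ) : ℚ) ^ m)) :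
    (n.factorial : Polynomial ℚ)
        * ∑ π ∈ invSet n,
            (4 : Polynomial ℚ) ^ lpk n π * Polynomial.X ^ lpk n π
              * (1 + Polynomial.X) ^ (n - 2 * lpk n π)
      = ∑ k ∈ Finset.range (n + 1),
          (dnk n k : Polynomial ℚ) * B k * (1 - Polynomial.X) ^ (n - k) := by
  refine Polynomial.coe_injective ℚ ?_
  rw [← one_sub_X_pow_mul_mk_sum_card_isEnrichedPartition,
    ← one_sub_X_pow_mul_mk_sum_dnk_mul_pow n hB]
  simp only [sum_card_isEnrichedPartition_alternatingSign]

end
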